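/- arXiv:quant-ph/0406207 — 7 statements merged into one kernel-verified Lean document; each statement's English description precedes it below -/
import Mathlib

section
/- Let θ be a real number with 0 < θ ≤ π/2 and let q̄ be a nonnegative real number. If (1 − cos θ)·(sin²((q̄+1)θ) + sin²(q̄θ))/sin²θ = 1, then θ = π/2 or cos((2q̄+1)θ) = −1, i.e. (2q̄+1)θ = (2k+1)π for some integer k ≥ 0; in particular, if in addition q̄ ≤ π/(2θ), then θ = π/2 or q̄ = (π − θ)/(2θ). -/
open Real

/-!
Writing `A = (q̄+1)θ` and `B = q̄θ`, one has `sin² A + sin² B = 1 - cos (A+B) cos (A-B)`, so the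
hypothesis becomes `(1 - cos θ)(1 - cos θ cos ((2q̄+1)θ)) = sin² θ = (1 - cos θ)(1 + cos θ)`.
Cancelling `1 - cos θ ≠ 0` leaves `cos θ (cos ((2q̄+1)θ) + 1) = 0`, and on `(0, π/2]` the first
factor vanishes only at `π/2`. The bound `q̄ ≤ π/(2θ)` gives `(2q̄+1)θ ≤ π + θ < 3π`, which
singles out the odd multiple `π`.
-/

theorem sin_sq_add_sin_sq_eq (A B : ℝ) :
    sin A ^ 2 + sin B ^ 2 = 1 - cos (A + B) * cos (A - B) := by
  have hA := sin_sq_add_cos_sq A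
  have hB := sin_sq_add_cos_sq B
  rw [cos_add, cos_sub]
  linear_combination (1 - sin B ^ 2) * hA + cos A ^ 2 * hB

/-- Theorem 1 of the paper: if the success probability
`(1 - cos θ)(sin²((q̄+1)θ) + sin²(q̄θ))/sin²θ` equals 1, then `θ = π/2` or
`cos((2q̄+1)θ) = -1`, i.e. `(2q̄+1)θ = (2k+1)π` for some integer `k ≥ 0`;
in particular, if moreover `q̄ ≤ π/(2θ)`, then `θ = π/2` or `q̄ = (π - θ)/(2θ)`. -/
theorem stmt_0 (θ qbar : ℝ) (hθ0 : 0 < θ) (hθ : θ ≤ π / 2) (hq : 0 ≤ qbar)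
    (h : (1 - cos θ) * (sin ((qbar + 1) * θ) ^ 2 + sin (qbar * θ) ^ 2) / sin θ ^ 2 = 1) :
    (θ = π / 2 ∨ (cos ((2 * qbar + 1) * θ) = -1 ∧
      ∃ k : ℤ, 0 ≤ k ∧ (2 * qbar + 1) * θ = (2 * (k : ℝ) + 1) * π)) ∧
    (qbar ≤ π / (2 * θ) → θ = π / 2 ∨ qbar = (π - θ) / (2 * θ)) := by
  have hpi := pi_pos
  have hsin : 0 < sin θ := sin_pos_of_pos_of_lt_pi hθ0 (by linarith)
  have hsq := sin_sq_add_cos_sq θ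
  have hc1 : 1 - cos θ ≠ 0 := by
    intro hc
    have hcos : cos θ = 1 := by linarith
    rw [hcos] at hsq
    nlinarith
  have key : θ = π / 2 ∨ (cos ((2 * qbar + 1) * θ) = -1 ∧
      ∃ k : ℤ, 0 ≤ k ∧ (2 * qbar + 1) * θ = (2 * (k : ℝ) + 1) * π) := by
    rw [div_eq_one_iff_eq (by positivity), sin_sq_add_sin_sq_eq,
      show (qbar + 1) * θ + qbar * θ = (2 * qbar + 1) * θ by ring,
      show (qbar + 1) * θ - qbar * θ = θ by ring] at h
    have hprod : cos θ * (cos ((2 * qbar + 1) * θ) + 1) = 0 := by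
      apply mul_left_cancel₀ hc1
      linear_combination -h - hsq
    rcases mul_eq_zero.mp hprod with hc | hC
    · left
      by_contra hne
      exact (cos_pos_of_mem_Ioo ⟨by linarith, lt_of_le_of_ne hθ hne⟩).ne' hc
    · right
      have hC' : cos ((2 * qbar + 1) * θ) = -1 := by linarith
      obtain ⟨k, hk⟩ := cos_eq_neg_one_iff.mp hC'
      refine ⟨hC', k, ?_, by linarith⟩
      have hpos : 0 < (2 * qbar + 1) * θ := by positivity
      have hk1 : (-1 : ℝ) < k := by nlinarith
      have hk2 : -1 < k := by exact_mod_cast hk1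
      omega
  refine ⟨key, fun hle => ?_⟩
  rcases key with hθ' | ⟨-, k, hk0, hk⟩
  · exact Or.inl hθ'
  · right
    rw [le_div_iff₀ (by positivity)] at hle
    have hk1 : (k : ℝ) < 1 := by nlinarith
    have hk2 : k < 1 := by exact_mod_cast hk1
    obtain rfl : k = 0 := by omega
    rw [eq_div_iff (by positivity)]
    push_cast at hk
    linarith
end

section
/- Let θ be a real number with 0 < θ ≤ π/2 and m a positive integer. Then (1/m) · Σ_{q=0}^{m−1} (1 − cos θ)·(sin²((q+1)θ) + sin²(qθ))/sin²θ = (1/(1 + cos θ))·(1 − cos θ · sin(2mθ)/(2m sin θ)). -/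
open Real Finset

/-!
Since `sin² (a + θ) + sin² a = 1 - cos θ * cos (2a + θ)` and
`2 sin θ * cos (2a + θ) = sin (2(a + θ)) - sin (2a)`, multiplying the sum by `2 sin θ` makes it
telescope (`two_sin_mul_sum`). The prefactor is `(1 - cos θ) / sin² θ = 1 / (1 + cos θ)`.
-/

lemma two_sin_mul_step (a θ : ℝ) :
    2 * sin θ * (sin (a + θ) ^ 2 + sin a ^ 2)
      = 2 * sin θ - cos θ * (sin (2 * (a + θ)) - sin (2 * a)) := by
  rw [sin_two_mul, sin_two_mul, sin_add, cos_add]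
  have h1 := sin_sq_add_cos_sq a
  have h2 := sin_sq_add_cos_sq θ
  grind

lemma two_sin_mul_sum (θ : ℝ) (m : ℕ) :
    2 * sin θ * ∑ q ∈ Finset.range m, (sin (((q : ℝ) + 1) * θ) ^ 2 + sin ((q : ℝ) * θ) ^ 2)
      = 2 * m * sin θ - cos θ * sin (2 * (m : ℝ) * θ) := by
  induction m with
  | zero => simp
  | succ k ih =>
    have h := two_sin_mul_step (k * θ) θ
    rw [Finset.sum_range_succ, mul_add, ih]
    have e1 : ((k : ℝ) + 1) * θ = k * θ + θ := by ring
    have e2 : 2 * ((k + 1 : ℕ) : ℝ) * θ = 2 * (k * θ + θ) := by push_cast; ring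
    have e3 : 2 * (k : ℝ) * θ = 2 * (k * θ) := by ring
    rw [e1, e2, e3, h]
    push_cast
    ring

/-- Lemma 2 of the paper (formula part): the average over `q ∈ {0, …, m-1}` of the
success probability `P_s^{(q)} = (1 - cos θ)(sin²((q+1)θ) + sin²(qθ))/sin²θ` equals
`(1/(1 + cos θ))·(1 - cos θ · sin(2mθ)/(2m sin θ))`. -/
theorem stmt_2 (θ : ℝ) (hθ0 : 0 < θ) (hθ : θ ≤ π / 2) (m : ℕ) (hm : 0 < m) :
    (1 / (m : ℝ)) * ∑ q ∈ Finset.range m,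
        (1 - cos θ) * (sin (((q : ℝ) + 1) * θ) ^ 2 + sin ((q : ℝ) * θ) ^ 2) / sin θ ^ 2
      = (1 / (1 + cos θ)) * (1 - cos θ * sin (2 * (m : ℝ) * θ) / (2 * (m : ℝ) * sin θ)) := by
  have hs : 0 < sin θ := sin_pos_of_pos_of_lt_pi hθ0 (by linarith [pi_pos])
  have hc : 0 ≤ cos θ := cos_nonneg_of_neg_pi_div_two_le_of_le (by linarith) hθ
  have hc1 : 1 + cos θ ≠ 0 := by positivity
  have hm' : (m : ℝ) ≠ 0 := by positivity
  have hpre : (1 - cos θ) / sin θ ^ 2 = 1 / (1 + cos θ) := by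
    rw [div_eq_div_iff (by positivity) hc1]
    linear_combination -sin_sq_add_cos_sq θ
  have hsum := two_sin_mul_sum θ m
  simp_rw [mul_div_right_comm, hpre]
  rw [← Finset.mul_sum]
  generalize (∑ q ∈ Finset.range m, (sin (((q : ℝ) + 1) * θ) ^ 2 + sin ((q : ℝ) * θ) ^ 2)) = T
    at hsum ⊢
  generalize sin (2 * (m : ℝ) * θ) = S at hsum ⊢
  field_simp
  linear_combination hsum
end

section
/- Let θ be a real number with 0 < θ ≤ π/2 and let m be a positive integer with m ≥ 1/sin θ. Then (1/(1 + cos θ))·(1 − cos θ · sin(2mθ)/(2m sin θ)) ≥ 1/4. -/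
open Real

/-- Lemma 2 of the paper (bound part): if `0 < θ ≤ π/2` and `m ≥ 1/sin θ`, then
`P_m = (1/(1 + cos θ))·(1 - cos θ · sin(2mθ)/(2m sin θ)) ≥ 1/4`. -/
theorem stmt_3 (θ : ℝ) (hθ0 : 0 < θ) (hθ : θ ≤ π / 2) (m : ℕ) (hm : 0 < m)
    (hm' : 1 / sin θ ≤ (m : ℝ)) :
    (1 / 4 : ℝ) ≤ (1 / (1 + cos θ)) * (1 - cos θ * sin (2 * (m : ℝ) * θ) / (2 * (m : ℝ) * sin θ)) := by
  have hs : 0 < sin θ := sin_pos_of_pos_of_lt_pi hθ0 (by linarith [pi_pos])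
  have hc : 0 ≤ cos θ := cos_nonneg_of_neg_pi_div_two_le_of_le (by linarith) hθ
  have hms : 1 ≤ (m : ℝ) * sin θ := (div_le_iff₀ hs).mp hm'
  -- Since `2 m sin θ ≥ 2` and `sin (2mθ) ≤ 1`, the subtracted term is at most `cos θ / 2`.
  have hfrac : cos θ * sin (2 * (m : ℝ) * θ) / (2 * (m : ℝ) * sin θ) ≤ cos θ / 2 := by
    rw [div_le_iff₀ (by linarith)]
    nlinarith [mul_le_mul_of_nonneg_left (sin_le_one (2 * (m : ℝ) * θ)) hc,
      mul_le_mul_of_nonneg_left hms hc]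
  -- It remains that `(1 + cos θ) / 4 ≤ 1 - cos θ / 2`, which is `cos θ ≤ 1`.
  rw [one_div_mul_eq_div, le_div_iff₀ (by linarith)]
  linarith [cos_le_one θ]
end

section
/- Fix real numbers s and y, and define sequences (a_q), (b_q), (c_q) for q ≥ 0 by a_0 = s, b_0 = s, c_0 = 0, and for q ≥ 1: a_q = 2⟨α_q⟩ − a_{q−1}, b_q = 2⟨α_q⟩ − c_{q−1}, c_q = −b_{q−1}, where ⟨α_q⟩ = y·a_{q−1} + (1 − y)·c_{q−1}. Then for every q ≥ 0: a_q = s·(U_q(y) − U_{q−1}(y)), b_q = s·U_q(y), and c_q = −s·U_{q−1}(y). -/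
open Polynomial

/-- Closed forms (Eqn 53 of the paper) for the amplitude recurrences of the
partial-diffusion search algorithm: with `a₀ = b₀ = s`, `c₀ = 0` and, for `q ≥ 1`,
`a_q = 2⟨α_q⟩ - a_{q-1}`, `b_q = 2⟨α_q⟩ - c_{q-1}`, `c_q = -b_{q-1}` where
`⟨α_q⟩ = y·a_{q-1} + (1 - y)·c_{q-1}`, one has `a_q = s(U_q(y) - U_{q-1}(y))`,
`b_q = s·U_q(y)` and `c_q = -s·U_{q-1}(y)` for all `q ≥ 0`, where `U` is the
Chebyshev polynomial of the second kind. -/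
theorem stmt_4 (s y : ℝ) (a b c : ℕ → ℝ)
    (ha0 : a 0 = s) (hb0 : b 0 = s) (hc0 : c 0 = 0)
    (ha : ∀ q : ℕ, 1 ≤ q →
      a q = 2 * (y * a (q - 1) + (1 - y) * c (q - 1)) - a (q - 1))
    (hb : ∀ q : ℕ, 1 ≤ q →
      b q = 2 * (y * a (q - 1) + (1 - y) * c (q - 1)) - c (q - 1))
    (hc : ∀ q : ℕ, 1 ≤ q → c q = - b (q - 1)) :
    ∀ q : ℕ,
      a q = s * ((Chebyshev.U ℝ (q : ℤ)).eval y - (Chebyshev.U ℝ ((q : ℤ) - 1)).eval y) ∧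
      b q = s * (Chebyshev.U ℝ (q : ℤ)).eval y ∧
      c q = - s * (Chebyshev.U ℝ ((q : ℤ) - 1)).eval y := by
  intro q
  induction q with
  | zero => simp [ha0, hb0, hc0]
  | succ q ih =>
    obtain ⟨iha, ihb, ihc⟩ := ih
    have hU : (Chebyshev.U ℝ ((q : ℤ) + 1)).eval y
        = 2 * y * (Chebyshev.U ℝ (q : ℤ)).eval y - (Chebyshev.U ℝ ((q : ℤ) - 1)).eval y := by
      simp [Chebyshev.U_add_one]
    -- The mean amplitude simplifies to `s * (y * U_q - U_{q-1})`, so each claim is the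
    -- three-term recurrence for `U`.
    rw [ha (q + 1) (by omega), hb (q + 1) (by omega), hc (q + 1) (by omega)]
    simp only [Nat.add_sub_cancel, Nat.cast_add, Nat.cast_one, add_sub_cancel_right]
    rw [iha, ihb, ihc, hU]
    refine ⟨?_, ?_, ?_⟩ <;> ring
end

section
/- For every real y with −1 ≤ y ≤ 1 and every integer q ≥ 0: (1 − y)·(U_q(y)² + U_{q−1}(y)²) + y·(U_q(y) − U_{q−1}(y))² = 1. -/
open Polynomial

/-- Normalization identity (Eqn 58 of the paper) in Chebyshev form: for `-1 ≤ y ≤ 1`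
and every integer `q ≥ 0`,
`(1 - y)(U_q(y)² + U_{q-1}(y)²) + y(U_q(y) - U_{q-1}(y))² = 1`, where `U` is the
Chebyshev polynomial of the second kind. -/
theorem stmt_5 (y : ℝ) (h1 : -1 ≤ y) (h2 : y ≤ 1) (q : ℕ) :
    (1 - y) * ((Chebyshev.U ℝ (q : ℤ)).eval y ^ 2 + (Chebyshev.U ℝ ((q : ℤ) - 1)).eval y ^ 2)
      + y * ((Chebyshev.U ℝ (q : ℤ)).eval y - (Chebyshev.U ℝ ((q : ℤ) - 1)).eval y) ^ 2 = 1 := by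
  -- The left side is `a² + b² - 2yab` with `a = U_q(y)`, `b = U_{q-1}(y)`; this quadratic form is
  -- invariant under the recurrence step `(a, b) ↦ (2ya - b, a)`.
  induction q with
  | zero => simp
  | succ k ih =>
    have h : (Chebyshev.U ℝ ((k : ℤ) + 1)).eval y
        = 2 * y * (Chebyshev.U ℝ (k : ℤ)).eval y - (Chebyshev.U ℝ ((k : ℤ) - 1)).eval y := by
      simp [Chebyshev.U_add_one]
    push_cast
    rw [add_sub_cancel_right, h]
    linear_combination ih
end

section
/- For every real x with 1/3 ≤ x ≤ 1: 5x − 8x² + 4x³ ≥ 25/27 > 0.9. -/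
/-- For `1/3 ≤ x ≤ 1`, the single-iteration success probability satisfies
`5x - 8x² + 4x³ ≥ 25/27 > 0.9`. -/
theorem stmt_15 (x : ℝ) (h1 : 1 / 3 ≤ x) (h2 : x ≤ 1) :
    (25 / 27 : ℝ) ≤ 5 * x - 8 * x ^ 2 + 4 * x ^ 3 ∧ (0.9 : ℝ) < 25 / 27 := by
  refine ⟨?_, by norm_num⟩
  -- The cubic takes the value 25/27 at 1/3 and, as a local minimum, at 5/6, so that
  -- 5x - 8x² + 4x³ - 25/27 = 4 (x - 1/3) (x - 5/6)².
  have h : 0 ≤ (x - 1 / 3) * (x - 5 / 6) ^ 2 :=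
    mul_nonneg (sub_nonneg.mpr h1) (sq_nonneg _)
  linarith
end

section
/- Let N and M be positive integers with M ≤ N, set s = 1/√N and y = 1 − M/N, and define sequences (a_q), (b_q), (c_q) by a_0 = s, b_0 = s, c_0 = 0, and for q ≥ 1: a_q = 2⟨α_q⟩ − a_{q−1}, b_q = 2⟨α_q⟩ − c_{q−1}, c_q = −b_{q−1}, where ⟨α_q⟩ = y·a_{q−1} + (1 − y)·c_{q−1}. Then for every q ≥ 0: (N − M)·a_q² + M·b_q² + M·c_q² = 1. -/
/-!
Induction on `q`. Since `M = N (1 - y)`, the claim reads `N (y a² + (1 - y) (b² + c²)) = 1`.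
One iteration reflects the pair `(a, c)` about its mean for the weights `y`, `1 - y`, which
preserves `y a² + (1 - y) c²`, stores the reflected `c` in `b`, and stores `-b` in `c`.
-/

/-- Eqn 58 of the paper: with `s = 1/√N`, `y = 1 - M/N`, and the amplitude
recurrences `a₀ = b₀ = s`, `c₀ = 0`, and for `q ≥ 1`: `a_q = 2⟨α_q⟩ - a_{q-1}`,
`b_q = 2⟨α_q⟩ - c_{q-1}`, `c_q = -b_{q-1}` where
`⟨α_q⟩ = y·a_{q-1} + (1 - y)·c_{q-1}`, the state stays normalized:
`(N - M)a_q² + Mb_q² + Mc_q² = 1` for all `q ≥ 0`. -/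
theorem stmt_19 (N M : ℕ) (hN : 0 < N) (hM : 0 < M) (hMN : M ≤ N)
    (s y : ℝ) (hs : s = 1 / Real.sqrt (N : ℝ)) (hy : y = 1 - (M : ℝ) / (N : ℝ))
    (a b c : ℕ → ℝ)
    (ha0 : a 0 = s) (hb0 : b 0 = s) (hc0 : c 0 = 0)
    (ha : ∀ q : ℕ, 1 ≤ q →
      a q = 2 * (y * a (q - 1) + (1 - y) * c (q - 1)) - a (q - 1))
    (hb : ∀ q : ℕ, 1 ≤ q →
      b q = 2 * (y * a (q - 1) + (1 - y) * c (q - 1)) - c (q - 1))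
    (hc : ∀ q : ℕ, 1 ≤ q → c q = - b (q - 1)) :
    ∀ q : ℕ, ((N : ℝ) - (M : ℝ)) * a q ^ 2 + (M : ℝ) * b q ^ 2 + (M : ℝ) * c q ^ 2 = 1 := by
  have hN' : (N : ℝ) ≠ 0 := by exact_mod_cast hN.ne'
  have hMy : (M : ℝ) = N * (1 - y) := by
    rw [hy]
    field_simp
    ring
  have hs2 : (N : ℝ) * s ^ 2 = 1 := by
    rw [hs, div_pow, Real.sq_sqrt (Nat.cast_nonneg N)]
    field_simp
  intro q
  induction q with
  | zero =>
    rw [ha0, hb0, hc0]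
    linear_combination hs2
  | succ k ih =>
    rw [ha (k + 1) (by omega), hb (k + 1) (by omega), hc (k + 1) (by omega)]
    simp only [Nat.add_sub_cancel]
    rw [hMy] at ih ⊢
    linear_combination ih
end
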